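/- Let G₁ and G₂ be discrete abelian groups, σ₁ a 2-cocycle on G₁, σ₂ a 2-cocycle on G₂, f : G₁ × G₂ → 𝕋 a bihomomorphism, and let σ be the 2-cocycle on G₁ × G₂ defined by σ((g₁,g₂),(h₁,h₂)) = σ₁(g₁,h₁)σ₂(g₂,h₂)f(h₁,g₂). Assume that f(h₁,g₂) = 1 for every (g₁,g₂) ∈ Z(G₁×G₂,σ) and every h₁ ∈ G₁. Then the image of Z(G₁×G₂,σ) under the first-coordinate projection is contained in Z(G₁,σ₁), and the index of Z(G₁×G₂,σ) in G₁×G₂ is at least the index of Z(G₁,σ₁) in G₁; in particular, if [G₁ : Z(G₁,σ₁)] is infinite then so is [G₁×G₂ : Z(G₁×G₂,σ)]. -/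

import Mathlib

/-- A (normalized) 2-cocycle on a discrete group `G` with values in the circle group. -/
def IsTwoCocycle {G : Type*} [Group G] (σ : G → G → Circle) : Prop :=
  (∀ g, σ g 1 = 1) ∧ (∀ g, σ 1 g = 1) ∧
    ∀ g h k, σ g h * σ (g * h) k = σ h k * σ g (h * k)

/-- The twisted center `Z(G,σ)`: all central elements `g` such that `σ(g,h) = σ(h,g)`
for every `h ∈ G`. -/
def twistedCenter {G : Type*} [Group G] (σ : G → G → Circle) : Set G :=
  {g | g ∈ Subgroup.center G ∧ ∀ h, σ g h = σ h g}

/-- The collection of left cosets `b • A` with `b` ranging over `B`.  When `A` is (the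
carrier of) a subgroup contained in `B`, this is the coset space of `A` in `B`; its
cardinality is the index of `A` in `B`. -/
def cosetsIn {G : Type*} [Group G] (A B : Set G) : Set (Set G) :=
  {C | ∃ b ∈ B, C = (fun a => b * a) '' A}

theorem twistedCenter_mul_mem {G : Type*} [CommGroup G] (σ : G → G → Circle)
    (hσ : IsTwoCocycle σ) {a b : G} (ha : a ∈ twistedCenter σ) (hb : b ∈ twistedCenter σ) :
    a * b ∈ twistedCenter σ := by
  obtain ⟨-, -, hc⟩ := hσ
  refine ⟨mul_mem ha.1 hb.1, fun h => ?_⟩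
  have h1 := hc a b h
  have h2 := hc h a b
  have h3 := hc a h b
  rw [← ha.2 h, mul_comm h a, h3, ← hb.2 h, mul_comm h b, ← h1] at h2
  exact mul_left_cancel h2

/-- Let `G₁, G₂` be discrete abelian groups with 2-cocycles `σ₁, σ₂`,
`f : G₁ × G₂ → 𝕋` a bihomomorphism, and
`σ((g₁,g₂),(h₁,h₂)) = σ₁(g₁,h₁)σ₂(g₂,h₂)f(h₁,g₂)`.  If `f(h₁,g₂) = 1` for every
`(g₁,g₂) ∈ Z(G₁×G₂,σ)` and every `h₁ ∈ G₁`, then the first-coordinate projection maps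
`Z(G₁×G₂,σ)` into `Z(G₁,σ₁)`, the index of `Z(G₁×G₂,σ)` in `G₁×G₂` is at least the
index of `Z(G₁,σ₁)` in `G₁`, and in particular infiniteness of the latter index implies
infiniteness of the former. -/
theorem twistedCenter_product_projection.{u}
    (G₁ G₂ : Type u) [CommGroup G₁] [CommGroup G₂]
    (σ₁ : G₁ → G₁ → Circle) (hσ₁ : IsTwoCocycle σ₁)
    (σ₂ : G₂ → G₂ → Circle) (hσ₂ : IsTwoCocycle σ₂)
    (f : G₁ → G₂ → Circle)
    (hf₁ : ∀ g g' : G₁, ∀ h : G₂, f (g * g') h = f g h * f g' h)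
    (hf₂ : ∀ g : G₁, ∀ h h' : G₂, f g (h * h') = f g h * f g h')
    (σ : G₁ × G₂ → G₁ × G₂ → Circle)
    (hσ : ∀ g h : G₁ × G₂, σ g h = σ₁ g.1 h.1 * σ₂ g.2 h.2 * f h.1 g.2)
    (hvanish : ∀ g ∈ twistedCenter σ, ∀ h₁ : G₁, f h₁ g.2 = 1) :
    (Prod.fst '' twistedCenter σ ⊆ twistedCenter σ₁) ∧
      Cardinal.mk (cosetsIn (twistedCenter σ₁) (Set.univ : Set G₁)) ≤
        Cardinal.mk (cosetsIn (twistedCenter σ) (Set.univ : Set (G₁ × G₂))) ∧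
      ((cosetsIn (twistedCenter σ₁) (Set.univ : Set G₁)).Infinite →
        (cosetsIn (twistedCenter σ) (Set.univ : Set (G₁ × G₂))).Infinite) := by
  have f1 : ∀ h, f 1 h = 1 := fun h => by
    have := hf₁ 1 1 h
    rw [mul_one] at this
    exact left_eq_mul.mp this
  have f2 : ∀ g, f g 1 = 1 := fun g => by
    have := hf₂ g 1 1
    rw [mul_one] at this
    exact left_eq_mul.mp this
  have hproj : ∀ g ∈ twistedCenter σ, g.1 ∈ twistedCenter σ₁ := by
    intro g hg
    refine ⟨by simp [Subgroup.mem_center_iff, mul_comm], fun h => ?_⟩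
    have h1 := hg.2 (h, 1)
    rw [hσ, hσ] at h1
    simpa [hσ₂.1, hσ₂.2.1, f2, hvanish g hg h] using h1
  have hone : (1 : G₁ × G₂) ∈ twistedCenter σ := by
    refine ⟨one_mem _, fun h => ?_⟩
    rw [hσ, hσ]
    simp [hσ₁.1, hσ₁.2.1, hσ₂.1, hσ₂.2.1, f1, f2]
  let F : Set (G₁ × G₂) → Set G₁ := fun C => {z | ∃ x ∈ C, ∃ y ∈ twistedCenter σ₁, z = x.1 * y}
  have hsub : cosetsIn (twistedCenter σ₁) (Set.univ : Set G₁) ⊆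
      F '' cosetsIn (twistedCenter σ) (Set.univ : Set (G₁ × G₂)) := by
    rintro C ⟨b, -, rfl⟩
    refine ⟨_, ⟨(b, 1), Set.mem_univ _, rfl⟩, ?_⟩
    ext z
    constructor
    · rintro ⟨_, ⟨a, ha, rfl⟩, y, hy, rfl⟩
      exact ⟨a.1 * y, twistedCenter_mul_mem σ₁ hσ₁ (hproj a ha) hy, (mul_assoc _ _ _).symm⟩
    · rintro ⟨y, hy, rfl⟩
      exact ⟨_, ⟨1, hone, rfl⟩, y, hy, by simp⟩
  refine ⟨?_, (Cardinal.mk_le_mk_of_subset hsub).trans Cardinal.mk_image_le,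
    fun hinf => (hinf.mono hsub).of_image F⟩
  rintro _ ⟨g, hg, rfl⟩
  exact hproj g hg
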